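/- For every n ≥ 4, the number of simsun permutations of {1,…,n} that avoid the pattern 123 equals 6. -/

import Mathlib

/-- `π` is simsun: for every `k`, the subword of the one-line notation of `π`
consisting of the `k` smallest entries (i.e. the values `< k`, in 0-based form)
contains no three consecutive decreasing elements.  Here "three consecutive
decreasing elements of the subword" means positions `a < b < c` whose values are
all `< k`, with no position carrying a value `< k` strictly between `a` and `b`
nor strictly between `b` and `c`, and with `π a > π b > π c`. -/
def IsSimsun {n : ℕ} (π : Equiv.Perm (Fin n)) : Prop :=
  ∀ k : ℕ, ¬ ∃ a b c : Fin n, a < b ∧ b < c ∧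
    (π a : ℕ) < k ∧ (π b : ℕ) < k ∧ (π c : ℕ) < k ∧
    (∀ m : Fin n, a < m → m < b → k ≤ (π m : ℕ)) ∧
    (∀ m : Fin n, b < m → m < c → k ≤ (π m : ℕ)) ∧
    (π c : ℕ) < (π b : ℕ) ∧ (π b : ℕ) < (π a : ℕ)

/-- `π` contains the pattern 123. -/
def Contains123 {n : ℕ} (π : Equiv.Perm (Fin n)) : Prop :=
  ∃ a b c : Fin n, a < b ∧ b < c ∧ π a < π b ∧ π b < π c

/-!
Every permutation of `n + 1` letters arises uniquely by inserting the maximum at some position `p`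
of a permutation `σ` of `n` letters. The result is simsun iff `σ` is simsun and has no descent at
`p` (otherwise the maximum starts a double descent), and it avoids 123 iff `σ` does and decreases
before position `p`. In a simsun permutation avoiding 123, descents and ascents alternate, so for
`4 ≤ n` exactly one position is allowed: 0 or 1 according to whether `σ` starts with an ascent or a
descent. Hence the number of such permutations is constant from `n = 4` on.
-/

open Equiv (Perm)

variable {n : ℕ}

/-- The entries at positions `a` and `b` form a descent of the subword of `π` consisting of the
values `< k`: they are consecutive in that subword and decreasing. -/
def IsSubwordDescent (π : Perm (Fin n)) (k : ℕ) (a b : Fin n) : Prop :=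
  a < b ∧ (π a : ℕ) < k ∧ (∀ m, a < m → m < b → k ≤ (π m : ℕ)) ∧ π b < π a

/-- `i` is a descent of the permutation `π`: the entry at position `i + 1` is smaller than the entry
at position `i`. Positions are 0-based natural numbers, and there is no descent when `n ≤ i + 1`. -/
def IsDescent (π : Perm (Fin n)) (i : ℕ) : Prop :=
  ∃ h : i + 1 < n, π ⟨i + 1, h⟩ < π ⟨i, by lia⟩

instance (π : Perm (Fin n)) (k : ℕ) (a b : Fin n) : Decidable (IsSubwordDescent π k a b) := by
  unfold IsSubwordDescent; infer_instance

instance (π : Perm (Fin n)) (i : ℕ) : Decidable (IsDescent π i) := by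
  unfold IsDescent; infer_instance

instance (π : Perm (Fin n)) : Decidable (Contains123 π) := by
  unfold Contains123; infer_instance

lemma isSubwordDescent_min (π : Perm (Fin n)) (k : ℕ) (a b : Fin n) :
    IsSubwordDescent π (min k n) a b ↔ IsSubwordDescent π k a b := by
  have gap (m : Fin n) : min k n ≤ (π m : ℕ) ↔ k ≤ (π m : ℕ) := by lia
  simp [IsSubwordDescent, gap, -inf_le_iff]

lemma isSubwordDescent_self (π : Perm (Fin n)) (a b : Fin n) :
    IsSubwordDescent π n a b ↔ (b : ℕ) = a + 1 ∧ IsDescent π a := by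
  constructor
  · rintro ⟨hab, -, hgap, hlt⟩
    have hb : (b : ℕ) = a + 1 := by
      by_contra hne
      have := hgap ⟨a + 1, by lia⟩ (Nat.lt_succ_self _)
        (by rw [Fin.lt_def] at hab ⊢; simp only; lia)
      lia
    exact ⟨hb, by lia, by rwa [← show b = ⟨a + 1, by lia⟩ from Fin.ext hb]⟩
  · rintro ⟨hb, h, hlt⟩
    obtain rfl : b = ⟨a + 1, h⟩ := Fin.ext hb
    refine ⟨by simp [Fin.lt_def], (π a).isLt, fun m ham hmb ↦ ?_, hlt⟩
    simp only [Fin.lt_def] at ham hmb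
    lia

lemma isSimsun_iff (π : Perm (Fin n)) :
    IsSimsun π ↔ ∀ k ≤ n, ∀ a b c, IsSubwordDescent π k a b → ¬ IsSubwordDescent π k b c := by
  have unbounded : IsSimsun π ↔
      ∀ k, ∀ a b c, IsSubwordDescent π k a b → ¬ IsSubwordDescent π k b c := by
    constructor
    · rintro h k a b c ⟨hab, ha, hgap, hba⟩ ⟨hbc, hb, hgap', hcb⟩
      exact h k ⟨a, b, c, hab, hbc, ha, hb, (Fin.lt_def.1 hcb).trans hb, hgap, hgap', hcb, hba⟩
    · rintro h k ⟨a, b, c, hab, hbc, ha, hb, -, hgap, hgap', hcb, hba⟩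
      exact h k a b c ⟨hab, ha, hgap, hba⟩ ⟨hbc, hb, hgap', hcb⟩
  refine unbounded.trans ⟨fun h k _ ↦ h k, fun h k a b c ↦ ?_⟩
  simpa only [isSubwordDescent_min] using h (min k n) (min_le_right k n) a b c

instance : DecidablePred (IsSimsun (n := n)) := fun π ↦ decidable_of_iff' _ (isSimsun_iff π)

lemma forall_not_isSubwordDescent_self_iff (π : Perm (Fin n)) :
    (∀ a b c, IsSubwordDescent π n a b → ¬ IsSubwordDescent π n b c) ↔
      ∀ i, IsDescent π i → ¬ IsDescent π (i + 1) := by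
  simp only [isSubwordDescent_self]
  constructor
  · rintro h i hi ⟨hi', hlt⟩
    exact h ⟨i, by lia⟩ ⟨i + 1, by lia⟩ ⟨i + 2, hi'⟩ ⟨rfl, hi⟩ ⟨rfl, hi', hlt⟩
  · rintro h a b c ⟨hb, ha⟩ ⟨-, hb'⟩
    exact h a ha (hb ▸ hb')

lemma IsSimsun.not_isDescent_succ {π : Perm (Fin n)} (hπ : IsSimsun π) {i : ℕ}
    (hi : IsDescent π i) : ¬ IsDescent π (i + 1) :=
  (forall_not_isSubwordDescent_self_iff π).1 ((isSimsun_iff π).1 hπ n le_rfl) i hi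

lemma lt_of_not_isDescent {π : Perm (Fin n)} {i : ℕ} (h : i + 1 < n) (hi : ¬ IsDescent π i) :
    π ⟨i, by lia⟩ < π ⟨i + 1, h⟩ :=
  (not_lt.1 fun hlt ↦ hi ⟨h, hlt⟩).lt_of_ne (π.injective.ne (by simp))

lemma isDescent_succ_iff_not {π : Perm (Fin n)} (hπ : IsSimsun π) (h123 : ¬ Contains123 π) {i : ℕ}
    (h : i + 2 < n) : IsDescent π (i + 1) ↔ ¬ IsDescent π i := by
  refine ⟨fun hs hi ↦ hπ.not_isDescent_succ hi hs, fun hi ↦ ?_⟩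
  by_contra hs
  exact h123 ⟨⟨i, by lia⟩, ⟨i + 1, by lia⟩, ⟨i + 2, h⟩, by simp, by simp,
    lt_of_not_isDescent _ hi, lt_of_not_isDescent h hs⟩

/-- The permutation of `n + 1` letters whose one-line notation is that of `σ` with the new maximum
inserted at position `p`. -/
def insertMax (p : Fin (n + 1)) (σ : Perm (Fin n)) : Perm (Fin (n + 1)) :=
  ((finSuccEquiv' p).trans σ.optionCongr).trans finSuccEquivLast.symm

section insertMax

variable (p : Fin (n + 1)) (σ : Perm (Fin n))

@[simp]
lemma insertMax_apply_self : insertMax p σ p = Fin.last n := by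
  simp [insertMax]

@[simp]
lemma insertMax_apply_succAbove (i : Fin n) :
    insertMax p σ (p.succAbove i) = (σ i).castSucc := by
  simp [insertMax]

lemma insertMax_bijective :
    Function.Bijective fun x : Fin (n + 1) × Perm (Fin n) ↦ insertMax x.1 x.2 := by
  refine (Fintype.bijective_iff_injective_and_card _).2 ⟨?_, ?_⟩
  · rintro ⟨p, σ⟩ ⟨q, τ⟩ (h : insertMax p σ = insertMax q τ)
    obtain rfl : p = q := (insertMax p σ).injective (by rw [insertMax_apply_self, h,
      insertMax_apply_self])
    have hστ : σ = τ := Equiv.ext fun i ↦ Fin.castSucc_injective n <| by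
      rw [← insertMax_apply_succAbove p, h, insertMax_apply_succAbove]
    rw [hστ]
  · simp [Fintype.card_perm, Nat.factorial_succ]

lemma not_isDescent_insertMax_of_succ_eq {i : ℕ} (h : i + 1 = p) :
    ¬ IsDescent (insertMax p σ) i := by
  rintro ⟨hi, hlt⟩
  rw [show (⟨i + 1, hi⟩ : Fin (n + 1)) = p from Fin.ext h, insertMax_apply_self] at hlt
  exact hlt.not_ge (Fin.le_last _)

lemma isDescent_insertMax_self : IsDescent (insertMax p σ) p ↔ (p : ℕ) < n := by
  refine ⟨fun ⟨h, _⟩ ↦ by lia, fun h ↦ ⟨by lia, ?_⟩⟩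
  rw [Fin.eta, insertMax_apply_self, Fin.lt_last_iff_ne_last, ← insertMax_apply_self p σ]
  exact (insertMax p σ).injective.ne (by simp [Fin.ext_iff])

lemma isDescent_insertMax_of_succ_lt {i : ℕ} (h : i + 1 < p) :
    IsDescent (insertMax p σ) i ↔ IsDescent σ i := by
  have apply_of_lt (j : ℕ) (hj : j < p) :
      insertMax p σ ⟨j, by lia⟩ = (σ ⟨j, by lia⟩).castSucc := by
    rw [← insertMax_apply_succAbove p, Fin.succAbove_of_castSucc_lt _ _ (by simpa [Fin.lt_def])]
    rfl
  simp [IsDescent, apply_of_lt i (by lia), apply_of_lt (i + 1) h, show i + 1 < n by lia,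
    show i < n by lia]

lemma isDescent_insertMax_succ_of_le {i : ℕ} (h : p ≤ i) :
    IsDescent (insertMax p σ) (i + 1) ↔ IsDescent σ i := by
  have apply_succ (j : ℕ) (hj : p ≤ j) (hjn : j < n) :
      insertMax p σ ⟨j + 1, by lia⟩ = (σ ⟨j, hjn⟩).castSucc := by
    rw [← insertMax_apply_succAbove p, Fin.succAbove_of_le_castSucc _ _ (by simpa [Fin.le_def])]
    rfl
  constructor
  · rintro ⟨hi, hlt⟩
    rw [apply_succ (i + 1) (by lia) (by lia), apply_succ i h (by lia)] at hlt
    exact ⟨by lia, hlt⟩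
  · rintro ⟨hi, hlt⟩
    refine ⟨by lia, ?_⟩
    rwa [apply_succ (i + 1) (by lia) (by lia), apply_succ i h (by lia)]

lemma isSubwordDescent_insertMax_succAbove {k : ℕ} (hk : k ≤ n) (a b : Fin n) :
    IsSubwordDescent (insertMax p σ) k (p.succAbove a) (p.succAbove b) ↔
      IsSubwordDescent σ k a b := by
  simp [IsSubwordDescent, Fin.forall_iff_succAbove p, hk]

lemma not_isSubwordDescent_insertMax_left {k : ℕ} (hk : k ≤ n) (b : Fin (n + 1)) :
    ¬ IsSubwordDescent (insertMax p σ) k p b := by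
  simp [IsSubwordDescent, hk.not_gt]

lemma not_isSubwordDescent_insertMax_right (k : ℕ) (a : Fin (n + 1)) :
    ¬ IsSubwordDescent (insertMax p σ) k a p := by
  simp [IsSubwordDescent, (Fin.le_last _).not_gt]

lemma isSimsun_insertMax_iff_forall_not_isDescent : IsSimsun (insertMax p σ) ↔
    IsSimsun σ ∧ ∀ i, IsDescent (insertMax p σ) i → ¬ IsDescent (insertMax p σ) (i + 1) := by
  rw [← forall_not_isSubwordDescent_self_iff, isSimsun_iff, isSimsun_iff σ]
  have restrict {k : ℕ} (hk : k ≤ n) :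
      (∀ a b c, IsSubwordDescent (insertMax p σ) k a b →
        ¬ IsSubwordDescent (insertMax p σ) k b c) ↔
      ∀ a b c, IsSubwordDescent σ k a b → ¬ IsSubwordDescent σ k b c := by
    simp [Fin.forall_iff_succAbove p, isSubwordDescent_insertMax_succAbove, hk,
      not_isSubwordDescent_insertMax_left, not_isSubwordDescent_insertMax_right]
  constructor
  · exact fun h ↦ ⟨fun k hk ↦ (restrict hk).1 (h k (by lia)), h (n + 1) le_rfl⟩
  · rintro ⟨hσ, hfull⟩ k hk
    rcases hk.lt_or_eq with hlt | rfl
    · exact (restrict (by lia)).2 (hσ k (by lia))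
    · exact hfull

theorem isSimsun_insertMax_iff :
    IsSimsun (insertMax p σ) ↔ IsSimsun σ ∧ ¬ IsDescent σ p := by
  rw [isSimsun_insertMax_iff_forall_not_isDescent]
  refine and_congr_right fun hσ ↦ ⟨fun h hp ↦ ?_, fun hp i hi hi' ↦ ?_⟩
  · have ⟨hpn, _⟩ := hp
    exact h p ((isDescent_insertMax_self p σ).2 (by lia))
      ((isDescent_insertMax_succ_of_le p σ le_rfl).2 hp)
  · rcases lt_trichotomy i p with hip | rfl | hip
    · have hip₁ : i + 1 ≠ p := fun h ↦ not_isDescent_insertMax_of_succ_eq p σ h hi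
      have hip₂ : i + 1 + 1 ≠ p := fun h ↦ not_isDescent_insertMax_of_succ_eq p σ h hi'
      rw [isDescent_insertMax_of_succ_lt p σ (by lia)] at hi hi'
      exact hσ.not_isDescent_succ hi hi'
    · exact hp ((isDescent_insertMax_succ_of_le p σ le_rfl).1 hi')
    · obtain ⟨j, rfl⟩ := Nat.exists_eq_succ_of_ne_zero (Nat.ne_zero_of_lt hip)
      rw [isDescent_insertMax_succ_of_le p σ (by lia)] at hi hi'
      exact hσ.not_isDescent_succ hi hi'

lemma contains123_insertMax_iff : Contains123 (insertMax p σ) ↔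
    Contains123 σ ∨ ∃ a b, a < b ∧ b.castSucc < p ∧ σ a < σ b := by
  constructor
  · rintro ⟨a, b, c, hab, hbc, hlt, hlt'⟩
    obtain ⟨a, rfl⟩ := Fin.exists_succAbove_eq (x := a) (y := p) <| by
      rintro rfl; simp [(Fin.le_last _).not_gt] at hlt
    obtain ⟨b, rfl⟩ := Fin.exists_succAbove_eq (x := b) (y := p) <| by
      rintro rfl; simp [(Fin.le_last _).not_gt] at hlt'
    rcases Fin.eq_self_or_eq_succAbove p c with rfl | ⟨c, rfl⟩
    · exact .inr ⟨a, b, by simpa using hab, (Fin.succAbove_lt_iff_castSucc_lt _ b).1 hbc,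
        by simpa using hlt⟩
    · exact .inl ⟨a, b, c, by simpa using hab, by simpa using hbc, by simpa using hlt,
        by simpa using hlt'⟩
  · rintro (⟨a, b, c, hab, hbc, hlt, hlt'⟩ | ⟨a, b, hab, hb, hlt⟩)
    · exact ⟨p.succAbove a, p.succAbove b, p.succAbove c, by simpa, by simpa, by simpa, by simpa⟩
    · exact ⟨p.succAbove a, p.succAbove b, p, by simpa,
        (Fin.succAbove_lt_iff_castSucc_lt p b).2 hb, by simpa, by simp [Fin.castSucc_lt_last]⟩

theorem not_contains123_insertMax_iff : ¬ Contains123 (insertMax p σ) ↔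
    ¬ Contains123 σ ∧ StrictAntiOn σ {i | i.castSucc < p} := by
  have strictAntiOn_iff : StrictAntiOn σ {i | i.castSucc < p} ↔
      ¬ ∃ a b, a < b ∧ b.castSucc < p ∧ σ a < σ b := by
    constructor
    · rintro h ⟨a, b, hab, hb, hlt⟩
      exact hlt.not_gt (h ((Fin.castSucc_lt_castSucc_iff.2 hab).trans hb) hb hab)
    · intro h a _ b hb hab
      exact (not_lt.1 fun hlt ↦ h ⟨a, b, hab, hb, hlt⟩).lt_of_ne (σ.injective.ne hab.ne')
  rw [strictAntiOn_iff, contains123_insertMax_iff, not_or]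

end insertMax

lemma isDescent_of_strictAntiOn {p : Fin (n + 1)} {σ : Perm (Fin n)}
    (h : StrictAntiOn σ {i | i.castSucc < p}) {i : ℕ} (hi : i + 1 < p) : IsDescent σ i :=
  have hp : (⟨i + 1, by lia⟩ : Fin n).castSucc < p := hi
  have hlt : (⟨i, by lia⟩ : Fin n) < ⟨i + 1, by lia⟩ := Nat.lt_succ_self i
  ⟨by lia, h ((Fin.castSucc_lt_castSucc_iff.2 hlt).trans hp) hp hlt⟩

/-- The only position at which the maximum can be inserted into a simsun permutation of at least
four letters avoiding 123 so that the result is again simsun and avoids 123. -/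
def forcedPosition (σ : Perm (Fin n)) : Fin (n + 1) :=
  if IsDescent σ 0 then 1 else 0

lemma not_isDescent_and_strictAntiOn_iff_eq_forcedPosition (hn : 4 ≤ n) {σ : Perm (Fin n)}
    (hσ : IsSimsun σ) (h123 : ¬ Contains123 σ) (p : Fin (n + 1)) :
    ¬ IsDescent σ p ∧ StrictAntiOn σ {i | i.castSucc < p} ↔ p = forcedPosition σ := by
  have alternate₀ : IsDescent σ 1 ↔ ¬ IsDescent σ 0 := isDescent_succ_iff_not hσ h123 (by lia)
  have alternate₁ : IsDescent σ 2 ↔ ¬ IsDescent σ 1 := isDescent_succ_iff_not hσ h123 (by lia)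
  have val_forcedPosition : (forcedPosition σ : ℕ) = if IsDescent σ 0 then 1 else 0 := by
    unfold forcedPosition
    split_ifs
    · exact Nat.mod_eq_of_lt (by lia)
    · rfl
  rw [Fin.ext_iff, val_forcedPosition]
  constructor
  · rintro ⟨hp, hanti⟩
    have h₀ : 2 ≤ (p : ℕ) → IsDescent σ 0 := fun h ↦ isDescent_of_strictAntiOn hanti h
    have h₁ : 3 ≤ (p : ℕ) → IsDescent σ 1 := fun h ↦ isDescent_of_strictAntiOn hanti h
    -- `3 ≤ p` would give descents at both 0 and 1; `p = 2` a descent at 0, hence one at 2.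
    grind
  · intro hp
    refine ⟨by grind, Set.Subsingleton.strictAntiOn σ ?_⟩
    intro i hi j hj
    simp only [Set.mem_ofPred_eq, Fin.lt_def, Fin.val_castSucc] at hi hj
    grind

theorem isSimsun_and_not_contains123_insertMax_iff (hn : 4 ≤ n) (p : Fin (n + 1))
    (σ : Perm (Fin n)) :
    IsSimsun (insertMax p σ) ∧ ¬ Contains123 (insertMax p σ) ↔
      (IsSimsun σ ∧ ¬ Contains123 σ) ∧ p = forcedPosition σ := by
  rw [isSimsun_insertMax_iff, not_contains123_insertMax_iff, and_and_and_comm]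
  exact and_congr_right fun h ↦
    not_isDescent_and_strictAntiOn_iff_eq_forcedPosition hn h.1 h.2 p

theorem card_simsun_avoid123_succ (hn : 4 ≤ n) :
    Nat.card {π : Perm (Fin (n + 1)) // IsSimsun π ∧ ¬ Contains123 π} =
      Nat.card {σ : Perm (Fin n) // IsSimsun σ ∧ ¬ Contains123 σ} := by
  have extend (σ : {σ : Perm (Fin n) // IsSimsun σ ∧ ¬ Contains123 σ}) :=
    (isSimsun_and_not_contains123_insertMax_iff hn _ σ.1).2 ⟨σ.2, rfl⟩
  symm
  refine Nat.card_eq_of_bijective (fun σ ↦ ⟨insertMax (forcedPosition σ.1) σ.1, extend σ⟩) ⟨?_, ?_⟩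
  · intro σ τ h
    have heq : (forcedPosition σ.1, σ.1) = (forcedPosition τ.1, τ.1) :=
      insertMax_bijective.injective (congrArg Subtype.val h)
    exact Subtype.ext (congrArg Prod.snd heq)
  · rintro ⟨π, hπ⟩
    obtain ⟨⟨p, σ⟩, rfl⟩ := insertMax_bijective.surjective π
    obtain ⟨hσ, rfl⟩ := (isSimsun_and_not_contains123_insertMax_iff hn p σ).1 hπ
    exact ⟨⟨σ, hσ⟩, rfl⟩

lemma card_simsun_avoid123_four :
    Nat.card {π : Perm (Fin 4) // IsSimsun π ∧ ¬ Contains123 π} = 6 := by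
  rw [Nat.card_eq_fintype_card]
  decide +kernel

/-- For `n ≥ 4`, there are exactly `6` simsun permutations of `{1, …, n}`
avoiding the pattern 123. -/
theorem simsun_avoid123_count (n : ℕ) (hn : 4 ≤ n) :
    Nat.card {π : Equiv.Perm (Fin n) // IsSimsun π ∧ ¬ Contains123 π} = 6 := by
  induction n, hn using Nat.le_induction with
  | base => exact card_simsun_avoid123_four
  | succ m hm ih => rw [card_simsun_avoid123_succ hm, ih]
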